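/- arXiv:2111.02056 — 2 statements merged into one kernel-verified Lean document; each statement's English description precedes it below -/
import Mathlib

section
/- Let S (states) and A (actions) be finite sets. Let π and π_b be policies, i.e., maps assigning to each s ∈ S a probability mass function π(·|s) resp. π_b(·|s) on A. Let ρ_π and ρ_{π_b} be probability mass functions on S (the state occupancy measures of π and π_b), and define the joint occupancy measures ρ_π(s,a) = ρ_π(s)·π(a|s) and ρ_{π_b}(s,a) = ρ_{π_b}(s)·π_b(a|s) on S × A. Then D_TV(ρ_π(s,a), ρ_{π_b}(s,a)) ≤ D_TV(ρ_π(s), ρ_{π_b}(s)) + Σ_{s∈S} ρ_{π_b}(s) · D_TV(π(·|s), π_b(·|s)). -/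
/-!
Interpolate between the two joint measures `ρ(s)π(a|s)` and `σ(s)κ(a|s)` through the mixed one
`σ(s)π(a|s)`. Changing only the state measure does not increase the total variation distance,
because every `π(·|s)` has mass at most one; changing only the policy costs exactly the average
over states of the distance between the policies. The triangle inequality adds the two costs.
-/

/-- The joint occupancy measure `ρ(s, a) = ρ(s) π(a|s)` on state-action pairs of a state
measure `ρ` and a policy `π`, where `π s a` stands for `π(a|s)`. -/
def jointOccupancy {S A R : Type*} [Mul R] (ρ : S → R) (π : S → A → R) (z : S × A) : R :=
  ρ z.1 * π z.1 z.2

section TotalVariation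

variable {S A R : Type*} [Fintype S] [Fintype A] [Field R] [LinearOrder R]

/-- The total variation distance `D_TV`, as half of the `ℓ¹` distance. It is defined for arbitrary
functions, so that it also applies to signed and unnormalized measures. -/
def tvDist (p q : A → R) : R :=
  (1 / 2) * ∑ a, |p a - q a|

variable [IsStrictOrderedRing R]

theorem tvDist_triangle (p q r : A → R) : tvDist p r ≤ tvDist p q + tvDist q r := by
  simp only [tvDist, ← mul_add, ← Finset.sum_add_distrib]
  gcongr
  exact abs_sub_le ..

theorem tvDist_jointOccupancy_left_le (ρ σ : S → R) {π : S → A → R}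
    (hπ : ∀ s, ∑ a, |π s a| ≤ 1) :
    tvDist (jointOccupancy ρ π) (jointOccupancy σ π) ≤ tvDist ρ σ := by
  simp only [tvDist, jointOccupancy, Fintype.sum_prod_type, ← sub_mul, abs_mul, ← Finset.mul_sum]
  gcongr with s
  exact mul_le_of_le_one_right (abs_nonneg _) (hπ s)

theorem tvDist_jointOccupancy_right (σ : S → R) (π κ : S → A → R) :
    tvDist (jointOccupancy σ π) (jointOccupancy σ κ) = ∑ s, |σ s| * tvDist (π s) (κ s) := by
  simp only [tvDist, jointOccupancy, Fintype.sum_prod_type, ← mul_sub, abs_mul, ← Finset.mul_sum,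
    mul_left_comm |σ _|]

theorem tv_occupancy_joint_le_general (ρ σ : S → R) {π : S → A → R} (κ : S → A → R)
    (hπ : ∀ s, ∑ a, |π s a| ≤ 1) :
    tvDist (jointOccupancy ρ π) (jointOccupancy σ κ)
      ≤ tvDist ρ σ + ∑ s, |σ s| * tvDist (π s) (κ s) :=
  calc tvDist (jointOccupancy ρ π) (jointOccupancy σ κ)
      ≤ tvDist (jointOccupancy ρ π) (jointOccupancy σ π)
        + tvDist (jointOccupancy σ π) (jointOccupancy σ κ) := tvDist_triangle ..
    _ ≤ tvDist ρ σ + ∑ s, |σ s| * tvDist (π s) (κ s) :=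
      add_le_add (tvDist_jointOccupancy_left_le ρ σ hπ) (tvDist_jointOccupancy_right σ π κ).le

end TotalVariation

/-- **Proposition A.1.** For policies `π, π_b` on finite state space `S` and action
space `A`, with state occupancy measures `ρπ, ρπb` and joint occupancy measures
`ρπ(s,a) = ρπ(s)·π(a|s)`, `ρπb(s,a) = ρπb(s)·πb(a|s)`, the total variation distance
between the joints is bounded by the TV distance of the state marginals plus the
expected (under `ρπb`) TV distance of the policies. -/
theorem tv_occupancy_joint_le
    {S A : Type*} [Fintype S] [Fintype A]
    (π πb : S → A → ℝ) (ρπ ρπb : S → ℝ)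
    (hπ : ∀ s a, 0 ≤ π s a) (hπsum : ∀ s, ∑ a, π s a = 1)
    (hπb : ∀ s a, 0 ≤ πb s a) (hπbsum : ∀ s, ∑ a, πb s a = 1)
    (hρπ : ∀ s, 0 ≤ ρπ s) (hρπsum : ∑ s, ρπ s = 1)
    (hρπb : ∀ s, 0 ≤ ρπb s) (hρπbsum : ∑ s, ρπb s = 1) :
    (1/2) * ∑ z : S × A, |ρπ z.1 * π z.1 z.2 - ρπb z.1 * πb z.1 z.2|
      ≤ (1/2) * ∑ s, |ρπ s - ρπb s|
        + ∑ s, ρπb s * ((1/2) * ∑ a, |π s a - πb s a|) := by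
  have hπmass (s : S) : ∑ a, |π s a| ≤ 1 := by
    simp only [abs_of_nonneg (hπ s _), hπsum, le_rfl]
  simpa only [tvDist, jointOccupancy, abs_of_nonneg (hρπb _)]
    using tv_occupancy_joint_le_general ρπ ρπb πb hπmass
end

section
/- Let S be a finite set and D ⊆ S a subset. Let ρ_π, ρ_{π_0}, ρ_{π_b} be probability mass functions on S, and let ρ̂ be a probability mass function on S supported on D (i.e., ρ̂(s) = 0 for all s ∉ D). Then D_TV(ρ_π, ρ_{π_b}) ≤ (1/2) Σ_{s∉D} ρ_{π_b}(s) + (1/2) Σ_{s∉D} |ρ_π(s) − ρ_{π_0}(s)| + (1/2) Σ_{s∉D} |ρ_{π_0}(s) − ρ_{π_b}(s)| + (1/2) Σ_{s∈D} |ρ_π(s) − ρ̂(s)| + D_TV(ρ̂, ρ_{π_b}). -/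
/-!
Off `D` the triangle inequality is applied through `ρπ0`, and on `D` through `ρhat`. The mass of
`ρπb` off `D` and the part of `D_TV(ρhat, ρπb)` carried by `Dᶜ` are nonnegative slack.
-/

section TriangleInequality

variable {ι G : Type*} [AddCommGroup G] [LinearOrder G] [IsOrderedAddMonoid G]

theorem sum_abs_sub_le_add (s : Finset ι) (f g h : ι → G) :
    ∑ i ∈ s, |f i - h i| ≤ ∑ i ∈ s, |f i - g i| + ∑ i ∈ s, |g i - h i| := by
  rw [← Finset.sum_add_distrib]
  exact Finset.sum_le_sum fun i _ => abs_sub_le (f i) (g i) (h i)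

variable [Fintype ι] [DecidableEq ι]

theorem sum_abs_sub_le_sum_compl_add_sum (D : Finset ι) (f g h k : ι → G) :
    ∑ i, |f i - h i|
      ≤ (∑ i ∈ Dᶜ, |f i - g i| + ∑ i ∈ Dᶜ, |g i - h i|)
        + (∑ i ∈ D, |f i - k i| + ∑ i ∈ D, |k i - h i|) := by
  rw [← Finset.sum_compl_add_sum D]
  exact add_le_add (sum_abs_sub_le_add Dᶜ f g h) (sum_abs_sub_le_add D f k h)

theorem tv_state_marginal_decomposition_general (D : Finset ι) (f g k : ι → G) {h : ι → G}
    (h_nonneg : ∀ i ∉ D, 0 ≤ h i) :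
    ∑ i, |f i - h i|
      ≤ ∑ i ∈ Dᶜ, h i
        + ∑ i ∈ Dᶜ, |f i - g i|
        + ∑ i ∈ Dᶜ, |g i - h i|
        + ∑ i ∈ D, |f i - k i|
        + ∑ i, |k i - h i| := by
  have mass_nonneg : 0 ≤ ∑ i ∈ Dᶜ, h i :=
    Finset.sum_nonneg fun i hi => h_nonneg i (Finset.mem_compl.mp hi)
  have sum_le_sum_univ : ∑ i ∈ D, |k i - h i| ≤ ∑ i, |k i - h i| :=
    Finset.sum_le_univ_sum_of_nonneg fun i => abs_nonneg (k i - h i)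
  calc
    ∑ i, |f i - h i|
      ≤ (∑ i ∈ Dᶜ, |f i - g i| + ∑ i ∈ Dᶜ, |g i - h i|)
        + (∑ i ∈ D, |f i - k i| + ∑ i ∈ D, |k i - h i|) :=
      sum_abs_sub_le_sum_compl_add_sum D f g h k
    _ ≤ ∑ i ∈ Dᶜ, h i + ((∑ i ∈ Dᶜ, |f i - g i| + ∑ i ∈ Dᶜ, |g i - h i|)
        + (∑ i ∈ D, |f i - k i| + ∑ i, |k i - h i|)) :=
      le_add_of_nonneg_of_le mass_nonneg (by gcongr)
    _ = _ := by abel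

end TriangleInequality

/-- **State-marginal decomposition (Eq. (12) in the proof of Theorem 1).**
For probability mass functions `ρπ, ρπ0, ρπb` on a finite set `S` and a
probability mass function `ρhat` supported on a subset `D ⊆ S`,
`D_TV(ρπ, ρπb)` is bounded by the sum of the out-of-data mass of `ρπb`, the
out-of-data discrepancies `|ρπ − ρπ0|` and `|ρπ0 − ρπb|`, the in-data
discrepancy `|ρπ − ρhat|`, and `D_TV(ρhat, ρπb)`. -/
theorem tv_state_marginal_decomposition
    {S : Type*} [Fintype S] [DecidableEq S] (D : Finset S)
    (ρπ ρπ0 ρπb ρhat : S → ℝ)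
    (hρπ : ∀ s, 0 ≤ ρπ s) (hρπsum : ∑ s, ρπ s = 1)
    (hρπ0 : ∀ s, 0 ≤ ρπ0 s) (hρπ0sum : ∑ s, ρπ0 s = 1)
    (hρπb : ∀ s, 0 ≤ ρπb s) (hρπbsum : ∑ s, ρπb s = 1)
    (hρhat : ∀ s, 0 ≤ ρhat s) (hρhatsum : ∑ s, ρhat s = 1)
    (hsupp : ∀ s ∉ D, ρhat s = 0) :
    (1/2) * ∑ s, |ρπ s - ρπb s|
      ≤ (1/2) * ∑ s ∈ Dᶜ, ρπb s
        + (1/2) * ∑ s ∈ Dᶜ, |ρπ s - ρπ0 s|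
        + (1/2) * ∑ s ∈ Dᶜ, |ρπ0 s - ρπb s|
        + (1/2) * ∑ s ∈ D, |ρπ s - ρhat s|
        + (1/2) * ∑ s, |ρhat s - ρπb s| := by
  linarith [tv_state_marginal_decomposition_general D ρπ ρπ0 ρhat fun s _ => hρπb s]
end
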